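/- Let m ≥ 2 and 1 ≤ p ≤ m′ = m/(m−1). On the sequence space ℓ_p (real or complex), the symmetric m-linear form L(x₁,…,x_m) = (1/m!) Σ_{σ ∈ S_m} x_{1σ(1)}⋯x_{mσ(m)}, whose associated m-homogeneous polynomial is L̂(u) = u₁⋯u_m, satisfies ‖L‖ = 1/m!, ‖L̂‖ = m^{−m/p}, and hence ‖L‖ = (m^{m/p}/m!)·‖L̂‖; consequently the m-th polarization constant of ℓ_p equals m^{m/p}/m! for 1 ≤ p ≤ m′. -/

import Mathlib

open Metric
open scoped ENNReal

/-!
Averaging over signs `ε`, a symmetric `m`-linear map `B` satisfies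
`2 ^ m * m! * B (x₁, …, x_m) = ∑ ε, ε₁ ⋯ ε_m * B̂ (∑ i, ε_i x_i)`, so `‖B‖ / ‖B̂‖` is at most
`1 / m!` times the largest average of `‖∑ i, ε_i x_i‖ ^ m` over unit vectors. When
`p ≤ m / (m - 1)`, the scalars satisfy Clarkson's inequality
`|s + t| ^ m + |s - t| ^ m ≤ 2 (|s| ^ p + |t| ^ p) ^ (m / p)`. Minkowski's inequality transfers it
to `ℓ_p`, and adding the vectors one at a time bounds the average by
`(∑ i, ‖x_i‖ ^ p) ^ (m / p) ≤ m ^ (m / p)`. Conversely, the symmetrized product of `m` coordinates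
takes the value `1 / m!` at the first `m` basis vectors, while by AM-GM its polynomial has norm
exactly `m ^ (-m / p)`.
-/

section RealInequalities

lemma add_mul_pow_mul_pow_le (a b : ℕ) {x y : ℝ} (hx : 0 ≤ x) (hy : 0 ≤ y) :
    ((a : ℝ) + b) * (x ^ a * y ^ b) ≤ a * x ^ (a + b) + b * y ^ (a + b) := by
  rcases Nat.eq_zero_or_pos (a + b) with h | h
  · obtain ⟨rfl, rfl⟩ := Nat.add_eq_zero_iff.1 h
    simp
  have hpos : (0 : ℝ) < (a : ℝ) + b := by exact_mod_cast h
  have root_pow (k : ℕ) {z : ℝ} (hz : 0 ≤ z) :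
      (z ^ (a + b)) ^ ((k : ℝ) / ((a : ℝ) + b)) = z ^ k := by
    rw [← Real.rpow_natCast_mul hz, ← Real.rpow_natCast]
    congr 1
    push_cast
    field_simp
  have amgm := Real.geom_mean_le_arith_mean2_weighted (w₁ := a / ((a : ℝ) + b))
    (w₂ := b / ((a : ℝ) + b)) (p₁ := x ^ (a + b)) (p₂ := y ^ (a + b))
    (by positivity) (by positivity) (by positivity) (by positivity) (by field_simp)
  rw [root_pow a hx, root_pow b hy] at amgm
  calc ((a : ℝ) + b) * (x ^ a * y ^ b)
      ≤ ((a : ℝ) + b) * (a / (a + b) * x ^ (a + b) + b / (a + b) * y ^ (a + b)) := by gcongr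
    _ = a * x ^ (a + b) + b * y ^ (a + b) := by field_simp

lemma choose_mul_pow_mul_pow_le (a b : ℕ) {x y : ℝ} (hx : 0 ≤ x) (hy : 0 ≤ y) :
    ((a + b + 2).choose (a + 1) : ℝ) * (x ^ (a + 1) * y ^ (b + 1)) ≤
      (a + b + 1).choose a * x ^ (a + b + 2) + (a + b + 1).choose (a + 1) * y ^ (a + b + 2) := by
  have choose_left : ((a : ℝ) + b + 2) * (a + b + 1).choose a =
      (a + b + 2).choose (a + 1) * (a + 1) := by
    exact_mod_cast Nat.add_one_mul_choose_eq (a + b + 1) a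
  have choose_right : ((a : ℝ) + b + 2) * (a + b + 1).choose (a + 1) =
      (a + b + 2).choose (a + 1) * (b + 1) := by
    have h := Nat.choose_mul_succ_eq (a + b + 1) (a + 1)
    rw [show a + b + 1 + 1 - (a + 1) = b + 1 by omega, mul_comm] at h
    exact_mod_cast h
  have amgm : ((a : ℝ) + b + 2) * (x ^ (a + 1) * y ^ (b + 1)) ≤
      (a + 1) * x ^ (a + b + 2) + (b + 1) * y ^ (a + b + 2) := by
    have h := add_mul_pow_mul_pow_le (a + 1) (b + 1) hx hy
    rw [show a + 1 + (b + 1) = a + b + 2 by ring] at h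
    convert h using 2 <;> push_cast <;> ring
  refine le_of_mul_le_mul_left ?_ (show 0 < (a : ℝ) + b + 2 by positivity)
  calc ((a : ℝ) + b + 2) * ((a + b + 2).choose (a + 1) * (x ^ (a + 1) * y ^ (b + 1)))
      = (a + b + 2).choose (a + 1) * ((a + b + 2) * (x ^ (a + 1) * y ^ (b + 1))) := by ring
    _ ≤ (a + b + 2).choose (a + 1) *
          ((a + 1) * x ^ (a + b + 2) + (b + 1) * y ^ (a + b + 2)) := by gcongr
    _ = _ := by
      linear_combination (-x ^ (a + b + 2)) * choose_left - y ^ (a + b + 2) * choose_right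

lemma choose_succ_mul_pow_mul_pow_le {n j : ℕ} (hj : j ≤ n) {x y : ℝ} (hx : 0 ≤ x)
    (hy : 0 ≤ y) :
    ((n + 1).choose (j + 1) : ℝ) * ((y ^ n) ^ (j + 1) * (x ^ n) ^ (n - j)) ≤
      n.choose (j + 1) * ((y ^ (n + 1)) ^ (j + 1) * (x ^ (n + 1)) ^ (n - (j + 1))) +
      n.choose j * ((y ^ (n + 1)) ^ j * (x ^ (n + 1)) ^ (n - j)) := by
  rcases hj.eq_or_lt with rfl | hlt
  · simp [← pow_mul, mul_comm]
  obtain ⟨d, rfl⟩ := Nat.exists_eq_add_of_lt hlt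
  rw [show j + d + 1 - j = d + 1 by omega, show j + d + 1 - (j + 1) = d by omega]
  calc ((j + d + 2).choose (j + 1) : ℝ) *
        ((y ^ (j + d + 1)) ^ (j + 1) * (x ^ (j + d + 1)) ^ (d + 1))
      = (y ^ (j + d + 2)) ^ j * (x ^ (j + d + 2)) ^ d *
          ((j + d + 2).choose (j + 1) * (x ^ (j + 1) * y ^ (d + 1))) := by ring
    _ ≤ (y ^ (j + d + 2)) ^ j * (x ^ (j + d + 2)) ^ d *
          ((j + d + 1).choose j * x ^ (j + d + 2) +
            (j + d + 1).choose (j + 1) * y ^ (j + d + 2)) := by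
        gcongr
        exact choose_mul_pow_mul_pow_le j d hx hy
    _ = _ := by ring

lemma add_pow_add_sub_pow_eq_sum (a b : ℝ) (n : ℕ) :
    (a + b) ^ n + (a - b) ^ n =
      ∑ k ∈ Finset.range (n + 1), (1 + (-1) ^ k) * (n.choose k * (b ^ k * a ^ (n - k))) := by
  rw [sub_eq_add_neg, add_comm a, add_comm a, add_pow, add_pow, ← Finset.sum_add_distrib]
  refine Finset.sum_congr rfl fun k _ => ?_
  rw [neg_pow b]
  ring

/- Every odd-degree term on the left has coefficient `0`, and every even-degree term is split by
Pascal's rule and weighted AM-GM into two neighbouring terms of the binomial expansion on the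
right, so that each of those is hit exactly once. -/
lemma add_pow_succ_add_sub_pow_succ_le (n : ℕ) {x y : ℝ} (hx : 0 ≤ x) (hy : 0 ≤ y) :
    (x ^ n + y ^ n) ^ (n + 1) + (x ^ n - y ^ n) ^ (n + 1) ≤
      2 * (x ^ (n + 1) + y ^ (n + 1)) ^ n := by
  let w : ℕ → ℝ := fun k => 1 + (-1) ^ k
  let c : ℕ → ℝ := fun j => n.choose j * ((y ^ (n + 1)) ^ j * (x ^ (n + 1)) ^ (n - j))
  have w_nonneg (k : ℕ) : 0 ≤ w k := by
    rcases neg_one_pow_eq_or ℝ k with h | h <;> simp [w, h]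
  have w_add_w_succ (k : ℕ) : w k + w (k + 1) = 2 := by simp only [w]; ring
  have c_last : c (n + 1) = 0 := by simp [c]
  calc (x ^ n + y ^ n) ^ (n + 1) + (x ^ n - y ^ n) ^ (n + 1)
      = ∑ j ∈ Finset.range (n + 1),
          w (j + 1) * ((n + 1).choose (j + 1) * ((y ^ n) ^ (j + 1) * (x ^ n) ^ (n - j))) +
            w 0 * c 0 := by
        rw [add_pow_add_sub_pow_eq_sum, Finset.sum_range_succ']
        simp [w, c, ← pow_mul, mul_comm]
    _ ≤ ∑ j ∈ Finset.range (n + 1), w (j + 1) * (c (j + 1) + c j) + w 0 * c 0 := by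
        gcongr with j hj
        · exact w_nonneg _
        · exact choose_succ_mul_pow_mul_pow_le (Finset.mem_range_succ_iff.1 hj) hx hy
    _ = ∑ j ∈ Finset.range (n + 1), w j * c j + ∑ j ∈ Finset.range (n + 1), w (j + 1) * c j := by
        have shift := Finset.sum_range_succ' (fun j => w j * c j) (n + 1)
        rw [Finset.sum_range_succ _ (n + 1), c_last, mul_zero, add_zero] at shift
        simp only [shift, mul_add, Finset.sum_add_distrib]
        ring
    _ = 2 * ∑ j ∈ Finset.range (n + 1), c j := by
        simp only [← Finset.sum_add_distrib, ← add_mul, w_add_w_succ, Finset.mul_sum]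
    _ = 2 * (x ^ (n + 1) + y ^ (n + 1)) ^ n := by
        rw [add_comm (x ^ (n + 1)), add_pow]
        congr! 2 with j
        ring

lemma add_pow_succ_add_abs_sub_pow_succ_le (n : ℕ) {x y : ℝ} (hx : 0 ≤ x) (hy : 0 ≤ y) :
    (x ^ n + y ^ n) ^ (n + 1) + |x ^ n - y ^ n| ^ (n + 1) ≤
      2 * (x ^ (n + 1) + y ^ (n + 1)) ^ n := by
  rcases le_total (y ^ n) (x ^ n) with h | h
  · rw [abs_of_nonneg (sub_nonneg.2 h)]
    exact add_pow_succ_add_sub_pow_succ_le n hx hy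
  · rw [abs_sub_comm, abs_of_nonneg (sub_nonneg.2 h), add_comm (x ^ n), add_comm (x ^ (n + 1))]
    exact add_pow_succ_add_sub_pow_succ_le n hy hx

lemma prod_le_rpow_of_sum_rpow_le_one {ι : Type*} [Fintype ι] [Nonempty ι] {p : ℝ} (hp : 0 < p)
    {a : ι → ℝ} (ha : ∀ i, 0 ≤ a i) (hsum : ∑ i, a i ^ p ≤ 1) :
    ∏ i, a i ≤ (Fintype.card ι : ℝ) ^ (-(Fintype.card ι : ℝ) / p) := by
  set m : ℝ := (Fintype.card ι : ℝ) with hm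
  have hm_pos : 0 < m := by positivity
  have prod_nonneg : 0 ≤ ∏ i, a i := Finset.prod_nonneg fun i _ => ha i
  have amgm : (∏ i, a i) ^ (p / m) ≤ m⁻¹ :=
    calc (∏ i, a i) ^ (p / m) = ∏ i, (a i ^ p) ^ m⁻¹ := by
          rw [← Real.finsetProd_rpow _ _ fun i _ => ha i]
          exact Finset.prod_congr rfl fun i _ => by rw [← Real.rpow_mul (ha i), div_eq_mul_inv]
      _ ≤ ∑ i, m⁻¹ * a i ^ p :=
          Real.geom_mean_le_arith_mean_weighted _ _ _ (fun _ _ => by positivity)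
            (by simp [← hm, hm_pos.ne']) fun i _ => Real.rpow_nonneg (ha i) p
      _ ≤ m⁻¹ := by
          rw [← Finset.mul_sum]
          exact mul_le_of_le_one_right (by positivity) hsum
  calc ∏ i, a i = ((∏ i, a i) ^ (p / m)) ^ (m / p) := by
        rw [← Real.rpow_mul prod_nonneg, div_mul_div_cancel₀ hm_pos.ne', div_self hp.ne',
          Real.rpow_one]
    _ ≤ m⁻¹ ^ (m / p) := by gcongr
    _ = m ^ (-m / p) := by
        rw [Real.inv_rpow hm_pos.le, neg_div, Real.rpow_neg hm_pos.le]

lemma rpow_add_rpow_le_of_hasSum {ι : Type*} {q : ℝ} (hq : 1 ≤ q) {f g h : ι → ℝ} {a b c : ℝ}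
    (hf : HasSum f a) (hg : HasSum g b) (hh : HasSum h c) (hf0 : ∀ i, 0 ≤ f i)
    (hg0 : ∀ i, 0 ≤ g i) (hh0 : ∀ i, 0 ≤ h i) (hle : ∀ i, f i ^ q + g i ^ q ≤ h i ^ q) :
    a ^ q + b ^ q ≤ c ^ q := by
  have hq0 : 0 < q := zero_lt_one.trans_le hq
  have q_toReal : (ENNReal.ofReal q).toReal = q := ENNReal.toReal_ofReal hq0.le
  have : Fact (1 ≤ ENNReal.ofReal q) := ⟨ENNReal.one_le_ofReal.2 hq⟩
  let pair (s t : ℝ) : WithLp (ENNReal.ofReal q) (ℝ × ℝ) := WithLp.toLp _ (s, t)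
  have norm_pair_le_iff {s t u : ℝ} (hs : 0 ≤ s) (ht : 0 ≤ t) (hu : 0 ≤ u) :
      ‖pair s t‖ ≤ u ↔ s ^ q + t ^ q ≤ u ^ q := by
    rw [WithLp.prod_norm_eq_add (by rwa [q_toReal]), q_toReal, one_div,
      Real.rpow_inv_le_iff_of_pos (by positivity) hu hq0]
    simp [pair, abs_of_nonneg, hs, ht]
  have hasSum_pair : HasSum (fun i => pair (f i) (g i)) (pair a b) :=
    (hf.prodMk hg).map (WithLp.prodContinuousLinearEquiv (ENNReal.ofReal q) ℝ ℝ ℝ).symm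
      (ContinuousLinearEquiv.continuous _)
  exact (norm_pair_le_iff (hf.nonneg hf0) (hg.nonneg hg0) (hh.nonneg hh0)).1
    (hasSum_pair.norm_le_of_bounded hh fun i =>
      (norm_pair_le_iff (hf0 i) (hg0 i) (hh0 i)).2 (hle i))

lemma sum_add_const_rpow_le {ι : Type*} {s : Finset ι} {q : ℝ} (hq : 1 ≤ q) {f : ι → ℝ}
    (hf : ∀ i ∈ s, 0 ≤ f i) {t c : ℝ} (ht : 0 ≤ t) (hc : 0 ≤ c)
    (hle : ∑ i ∈ s, f i ^ q ≤ s.card * t ^ q) :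
    ∑ i ∈ s, (f i + c) ^ q ≤ s.card * (t + c) ^ q := by
  have hq0 : 0 < q := zero_lt_one.trans_le hq
  have card_mul_rpow {v : ℝ} (hv : 0 ≤ v) :
      (s.card * v ^ q) ^ (1 / q) = (s.card : ℝ) ^ (1 / q) * v := by
    rw [Real.mul_rpow (by positivity) (by positivity), one_div, Real.rpow_rpow_inv hv hq0.ne']
  have sum_nonneg : 0 ≤ ∑ i ∈ s, f i ^ q :=
    Finset.sum_nonneg fun i hi => Real.rpow_nonneg (hf i hi) q
  have sum_add_nonneg : 0 ≤ ∑ i ∈ s, (f i + c) ^ q :=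
    Finset.sum_nonneg fun i hi => Real.rpow_nonneg (add_nonneg (hf i hi) hc) q
  rw [← Real.rpow_le_rpow_iff sum_add_nonneg (by positivity) (one_div_pos.2 hq0)]
  calc (∑ i ∈ s, (f i + c) ^ q) ^ (1 / q)
      ≤ (∑ i ∈ s, f i ^ q) ^ (1 / q) + (∑ _i ∈ s, c ^ q) ^ (1 / q) :=
        Real.Lp_add_le_of_nonneg s hq hf fun _ _ => hc
    _ ≤ (s.card * t ^ q) ^ (1 / q) + (s.card * c ^ q) ^ (1 / q) := by
        rw [Finset.sum_const, nsmul_eq_mul]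
        gcongr
    _ = (s.card * (t + c) ^ q) ^ (1 / q) := by
        rw [card_mul_rpow ht, card_mul_rpow hc, card_mul_rpow (add_nonneg ht hc), mul_add]

end RealInequalities

section Clarkson

lemma convexOn_add_le_of_mem_segment {E : Type*} [AddCommGroup E] [Module ℝ E] {s : Set E}
    {f : E → ℝ} (hf : ConvexOn ℝ s f) {x y u v : E} (hx : x ∈ s) (hy : y ∈ s)
    (hu : u ∈ segment ℝ x y) (huv : u + v = x + y) : f u + f v ≤ f x + f y := by
  obtain ⟨a, b, ha, hb, hab, rfl⟩ := hu
  have hv : v = b • x + a • y := by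
    linear_combination (norm := module) huv - hab • (x + y)
  have hu_le := hf.2 hx hy ha hb hab
  have hv_le := hf.2 hx hy hb ha (by rwa [add_comm])
  simp only [smul_eq_mul] at hu_le hv_le
  rw [hv]
  linear_combination hu_le + hv_le + (f x + f y) * hab

lemma norm_add_rpow_add_norm_sub_rpow_le {E : Type*} [SeminormedAddCommGroup E]
    [InnerProductSpace ℝ E] {s : ℝ} (hs : 2 ≤ s) (x y : E) :
    ‖x + y‖ ^ s + ‖x - y‖ ^ s ≤ (‖x‖ + ‖y‖) ^ s + |‖x‖ - ‖y‖| ^ s := by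
  have sq_rpow {t : ℝ} (ht : 0 ≤ t) : (t ^ 2) ^ (s / 2) = t ^ s := by
    rw [← Real.rpow_natCast_mul ht]
    congr 1
    push_cast
    ring
  have h_mem : ‖x + y‖ ^ 2 ∈ segment ℝ (|‖x‖ - ‖y‖| ^ 2) ((‖x‖ + ‖y‖) ^ 2) := by
    have lower : |‖x‖ - ‖y‖| ≤ ‖x + y‖ := by simpa using abs_norm_sub_norm_le x (-y)
    have upper := norm_add_le x y
    rw [segment_eq_Icc ((pow_le_pow_left₀ (abs_nonneg _) lower 2).trans (by gcongr))]
    exact ⟨by gcongr, by gcongr⟩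
  have h_sum : ‖x + y‖ ^ 2 + ‖x - y‖ ^ 2 = |‖x‖ - ‖y‖| ^ 2 + (‖x‖ + ‖y‖) ^ 2 := by
    rw [sq_abs]
    linear_combination parallelogram_law_with_norm ℝ x y
  have h := convexOn_add_le_of_mem_segment (convexOn_rpow (p := s / 2) (by linarith))
    (Set.mem_Ici.2 (by positivity)) (Set.mem_Ici.2 (by positivity)) h_mem h_sum
  rwa [sq_rpow (norm_nonneg _), sq_rpow (norm_nonneg _), sq_rpow (abs_nonneg _),
    sq_rpow (by positivity), add_comm (|‖x‖ - ‖y‖| ^ s)] at h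

/-- The two-point Clarkson inequality with exponents `p` and `s` on a normed group. Classically
`s ≥ 2` and `p` lies between `1` and the conjugate exponent of `s`; it is the two-vector case of
the Rademacher average bound `ClarksonInequality.sum_norm_sum_sign_smul_rpow_le`. -/
def ClarksonInequality (E : Type*) [SeminormedAddCommGroup E] (p s : ℝ) : Prop :=
  ∀ x y : E, ‖x + y‖ ^ s + ‖x - y‖ ^ s ≤ 2 * (‖x‖ ^ p + ‖y‖ ^ p) ^ (s / p)

theorem clarksonInequality_of_innerProductSpace (E : Type*) [SeminormedAddCommGroup E]
    [InnerProductSpace ℝ E] {m : ℕ} (hm : 2 ≤ m) :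
    ClarksonInequality E ((m : ℝ) / (m - 1)) m := by
  obtain ⟨n, rfl⟩ : ∃ n, m = n + 1 := ⟨m - 1, by omega⟩
  have hn : (n : ℝ) ≠ 0 := Nat.cast_ne_zero.2 (by omega)
  intro x y
  have root_pow {t : ℝ} (ht : 0 ≤ t) : (t ^ (n : ℝ)⁻¹) ^ n = t := by
    rw [← Real.rpow_mul_natCast ht, inv_mul_cancel₀ hn, Real.rpow_one]
  have root_pow_succ {t : ℝ} (ht : 0 ≤ t) :
      (t ^ (n : ℝ)⁻¹) ^ (n + 1) = t ^ (((n : ℝ) + 1) / n) := by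
    rw [← Real.rpow_mul_natCast ht]
    congr 1
    push_cast
    ring
  have exponent : ((n : ℝ) + 1) / ((n + 1) / n) = n := by field_simp
  have h_norms := norm_add_rpow_add_norm_sub_rpow_le (s := (n + 1 : ℕ)) (by exact_mod_cast hm) x y
  have h_real := add_pow_succ_add_abs_sub_pow_succ_le n (x := ‖x‖ ^ (n : ℝ)⁻¹)
    (y := ‖y‖ ^ (n : ℝ)⁻¹) (by positivity) (by positivity)
  rw [root_pow (norm_nonneg x), root_pow (norm_nonneg y), root_pow_succ (norm_nonneg x),
    root_pow_succ (norm_nonneg y)] at h_real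
  push_cast
  rw [add_sub_cancel_right, exponent, Real.rpow_natCast]
  refine le_trans ?_ h_real
  exact_mod_cast h_norms

namespace ClarksonInequality

theorem mono {E : Type*} [SeminormedAddCommGroup E] {p r s : ℝ} (h : ClarksonInequality E r s)
    (hp : 0 < p) (hpr : p ≤ r) (hs : 0 ≤ s) : ClarksonInequality E p s := by
  intro x y
  refine (h x y).trans ?_
  have key := Real.rpow_add_rpow_le (norm_nonneg x) (norm_nonneg y) hp hpr
  calc 2 * (‖x‖ ^ r + ‖y‖ ^ r) ^ (s / r)
      = 2 * ((‖x‖ ^ r + ‖y‖ ^ r) ^ (1 / r)) ^ s := by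
        rw [← Real.rpow_mul (by positivity), one_div_mul_eq_div]
    _ ≤ 2 * ((‖x‖ ^ p + ‖y‖ ^ p) ^ (1 / p)) ^ s := by gcongr
    _ = 2 * (‖x‖ ^ p + ‖y‖ ^ p) ^ (s / p) := by
        rw [← Real.rpow_mul (by positivity), one_div_mul_eq_div]

/- Coordinatewise, the inequality compares `p`-th powers in the plane with the `ℓ_{s/p}` norm, so
Minkowski's inequality there allows summing over the coordinates. -/
theorem lp {α : Type*} {E : α → Type*} [∀ i, NormedAddCommGroup (E i)] {p : ℝ≥0∞} [Fact (1 ≤ p)]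
    {s : ℝ} (hp : 0 < p.toReal) (hps : p.toReal ≤ s)
    (h : ∀ i, ClarksonInequality (E i) p.toReal s) :
    ClarksonInequality (_root_.lp E p) p.toReal s := by
  intro x y
  set r := p.toReal
  have hq : 1 ≤ s / r := (one_le_div hp).2 hps
  have rpow_exponent {t : ℝ} (ht : 0 ≤ t) : (t ^ r) ^ (s / r) = t ^ s := by
    rw [← Real.rpow_mul ht, mul_div_cancel₀ _ hp.ne']
  have two_rpow {t : ℝ} (ht : 0 ≤ t) : (2 ^ (s / r)⁻¹ * t) ^ (s / r) = 2 * t ^ (s / r) := by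
    rw [Real.mul_rpow (by positivity) ht, Real.rpow_inv_rpow zero_le_two (by positivity)]
  have key := rpow_add_rpow_le_of_hasSum hq (lp.hasSum_norm hp (x + y)) (lp.hasSum_norm hp (x - y))
    (((lp.hasSum_norm hp x).add (lp.hasSum_norm hp y)).mul_left (2 ^ (s / r)⁻¹))
    (fun _ => by positivity) (fun _ => by positivity) (fun _ => by positivity) fun i => by
      rw [rpow_exponent (norm_nonneg _), rpow_exponent (norm_nonneg _), two_rpow (by positivity)]
      exact h i (x i) (y i)
  rwa [rpow_exponent (norm_nonneg _), rpow_exponent (norm_nonneg _),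
    two_rpow (by positivity)] at key

/- Adding one vector `x a` at a time: flipping the sign `ε a` preserves the sum over `ε`, so the
sum may be symmetrized in `x a` and the two-point inequality applied for each `ε`. -/
theorem sum_norm_sum_sign_smul_rpow_le {E : Type*} [SeminormedAddCommGroup E] {p s : ℝ}
    (h : ClarksonInequality E p s) (hp : 0 < p) (hps : p ≤ s) {ι : Type*} [Fintype ι]
    [DecidableEq ι] (x : ι → E) (t : Finset ι) :
    ∑ ε : ι → ℤˣ, ‖∑ i ∈ t, ε i • x i‖ ^ s ≤
      2 ^ Fintype.card ι * (∑ i ∈ t, ‖x i‖ ^ p) ^ (s / p) := by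
  have hs : 0 < s := hp.trans_le hps
  induction t using Finset.induction_on with
  | empty => simp [hs.ne', hp.ne']
  | insert a t ha ih =>
    let S (ε : ι → ℤˣ) : E := ∑ i ∈ t, ε i • x i
    have two_point (ε : ι → ℤˣ) : ‖ε a • x a + S ε‖ ^ s + ‖-(ε a • x a) + S ε‖ ^ s ≤
        2 * (‖S ε‖ ^ p + ‖x a‖ ^ p) ^ (s / p) := by
      have h_le := h (S ε) (ε a • x a)
      rwa [norm_units_zsmul, add_comm (S ε), sub_eq_neg_add] at h_le
    have flip : ∑ ε : ι → ℤˣ, ‖-(ε a • x a) + S ε‖ ^ s = ∑ ε : ι → ℤˣ, ‖ε a • x a + S ε‖ ^ s := by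
      refine Fintype.sum_equiv (Equiv.mulRight (Pi.mulSingle a (-1))) _ _ fun ε => ?_
      have S_flip : S (ε * Pi.mulSingle a (-1)) = S ε := Finset.sum_congr rfl fun i hi => by
        simp [Pi.mulSingle_eq_of_ne (ne_of_mem_of_not_mem hi ha)]
      simp [S_flip]
    have S_rpow (ε : ι → ℤˣ) : (‖S ε‖ ^ p) ^ (s / p) = ‖S ε‖ ^ s := by
      rw [← Real.rpow_mul (norm_nonneg _), mul_div_cancel₀ _ hp.ne']
    have card_signs : ((Finset.univ : Finset (ι → ℤˣ)).card : ℝ) = 2 ^ Fintype.card ι := by simp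
    simp only [Finset.sum_insert ha]
    calc ∑ ε : ι → ℤˣ, ‖ε a • x a + S ε‖ ^ s
        = (∑ ε : ι → ℤˣ, (‖ε a • x a + S ε‖ ^ s + ‖-(ε a • x a) + S ε‖ ^ s)) / 2 := by
          rw [Finset.sum_add_distrib, flip, add_self_div_two]
      _ ≤ (∑ ε : ι → ℤˣ, 2 * (‖S ε‖ ^ p + ‖x a‖ ^ p) ^ (s / p)) / 2 := by
          gcongr with ε
          exact two_point ε
      _ = ∑ ε : ι → ℤˣ, (‖S ε‖ ^ p + ‖x a‖ ^ p) ^ (s / p) := by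
          rw [← Finset.mul_sum, mul_div_cancel_left₀ _ two_ne_zero]
      _ ≤ 2 ^ Fintype.card ι * (∑ i ∈ t, ‖x i‖ ^ p + ‖x a‖ ^ p) ^ (s / p) := by
          rw [← card_signs]
          refine sum_add_const_rpow_le ((one_le_div hp).2 hps) (fun _ _ => by positivity)
            (by positivity) (by positivity) ?_
          simpa only [S_rpow, card_signs] using ih
      _ = 2 ^ Fintype.card ι * (‖x a‖ ^ p + ∑ i ∈ t, ‖x i‖ ^ p) ^ (s / p) := by
          rw [add_comm (‖x a‖ ^ p)]

end ClarksonInequality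

end Clarkson

section Polarization

variable {ι : Type*} [Fintype ι] [DecidableEq ι]

lemma sum_prod_sign_mul_prod_sign_eq_zero {f : ι → ι} (hf : ¬ Function.Surjective f) :
    ∑ ε : ι → ℤˣ, (((∏ i, ε i) * ∏ i, ε (f i) : ℤˣ) : ℤ) = 0 := by
  obtain ⟨a, ha⟩ := not_forall.1 hf
  refine self_eq_neg.1 ?_
  rw [← Finset.sum_neg_distrib]
  refine Fintype.sum_equiv (Equiv.mulRight (Pi.mulSingle a (-1))) _ _ fun ε => ?_
  have apply_ne (i : ι) : f i ≠ a := fun h => ha ⟨i, h⟩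
  simp [Pi.mulSingle_eq_of_ne (apply_ne _), Finset.prod_mul_distrib]

lemma sum_prod_sign_mul_prod_sign_perm (σ : Equiv.Perm ι) :
    ∑ ε : ι → ℤˣ, (((∏ i, ε i) * ∏ i, ε (σ i) : ℤˣ) : ℤ) = 2 ^ Fintype.card ι := by
  simp [Equiv.prod_comp σ, Int.units_mul_self]

theorem sum_prod_sign_smul_map_sum_sign_smul {R M N : Type*} [CommRing R] [AddCommGroup M]
    [AddCommGroup N] [Module R M] [Module R N] (B : MultilinearMap R (fun _ : ι => M) N)
    (hB : ∀ (σ : Equiv.Perm ι) (v : ι → M), B (v ∘ σ) = B v) (x : ι → M) :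
    ∑ ε : ι → ℤˣ, (∏ i, ε i) • B (fun _ => ∑ i, ε i • x i) =
      (2 ^ Fintype.card ι * (Fintype.card ι).factorial) • B x := by
  have map_sign_smul (ε : ι → ℤˣ) (v : ι → M) : B (fun i => ε i • v i) = (∏ i, ε i) • B v := by
    have h := B.map_smul_univ (fun i => ((ε i : ℤ) : R)) v
    simp only [Int.cast_smul_eq_zsmul, ← Units.smul_def] at h
    rw [h, ← Int.cast_prod, Int.cast_smul_eq_zsmul, ← Units.coe_prod, ← Units.smul_def]
  calc ∑ ε : ι → ℤˣ, (∏ i, ε i) • B (fun _ => ∑ i, ε i • x i)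
      = ∑ ε : ι → ℤˣ, ∑ f : ι → ι, ((∏ i, ε i) * ∏ i, ε (f i)) • B (x ∘ f) := by
        refine Finset.sum_congr rfl fun ε _ => ?_
        rw [B.map_sum, Finset.smul_sum]
        refine Finset.sum_congr rfl fun f _ => ?_
        rw [map_sign_smul (fun i => ε (f i)) fun i => x (f i), mul_smul]
        rfl
    _ = ∑ f : ι → ι, (∑ ε : ι → ℤˣ, (((∏ i, ε i) * ∏ i, ε (f i) : ℤˣ) : ℤ)) • B (x ∘ f) := by
        rw [Finset.sum_comm]
        simp only [Finset.sum_smul, Units.smul_def]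
    _ = ∑ σ : Equiv.Perm ι, (2 ^ Fintype.card ι : ℤ) • B (x ∘ σ) := by
        refine (Fintype.sum_of_injective (fun σ : Equiv.Perm ι => (σ : ι → ι))
          DFunLike.coe_injective _ _ (fun f hf => ?_) fun σ => ?_).symm
        · rw [sum_prod_sign_mul_prod_sign_eq_zero, zero_smul]
          exact fun h => hf ⟨Equiv.ofBijective f (Finite.surjective_iff_bijective.1 h), rfl⟩
        · rw [sum_prod_sign_mul_prod_sign_perm]
    _ = (2 ^ Fintype.card ι * (Fintype.card ι).factorial) • B x := by
        simp only [hB, Finset.sum_const, Finset.card_univ, Fintype.card_perm]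
        rw [mul_comm, mul_smul, ← natCast_zsmul _ (2 ^ _)]
        push_cast
        rfl

end Polarization

section DiagonalNorm

variable {𝕜 E F ι : Type*} [RCLike 𝕜] [NormedAddCommGroup E] [NormedSpace 𝕜 E]
  [SeminormedAddCommGroup F] [NormedSpace 𝕜 F]

/-- The norm `‖B̂‖` of the homogeneous polynomial `B̂ u = B (u, …, u)` associated with a continuous
multilinear map `B`, as a supremum over the closed unit ball. -/
noncomputable def diagonalNorm (B : ContinuousMultilinearMap 𝕜 (fun _ : ι => E) F) : ℝ :=
  sSup ((fun u => ‖B (fun _ => u)‖) '' closedBall (0 : E) 1)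

lemma diagonalNorm_nonneg (B : ContinuousMultilinearMap 𝕜 (fun _ : ι => E) F) :
    0 ≤ diagonalNorm B :=
  Real.sSup_nonneg (by rintro _ ⟨u, _, rfl⟩; exact norm_nonneg _)

variable (𝕜) in
lemma exists_norm_le_one_and_norm_smul_eq (x : E) : ∃ w : E, ‖w‖ ≤ 1 ∧ (‖x‖ : 𝕜) • w = x := by
  refine ⟨(‖x‖ : 𝕜)⁻¹ • x, ?_, ?_⟩
  · simpa [norm_smul] using inv_mul_le_one
  · rcases eq_or_ne x 0 with rfl | hx
    · simp
    · exact smul_inv_smul₀ (by simpa using hx) x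

lemma norm_apply_diag_le_diagonalNorm [Finite ι]
    (B : ContinuousMultilinearMap 𝕜 (fun _ : ι => E) F) {u : E} (hu : ‖u‖ ≤ 1) :
    ‖B (fun _ => u)‖ ≤ diagonalNorm B := by
  have := Fintype.ofFinite ι
  refine le_csSup ⟨‖B‖, ?_⟩ ⟨u, mem_closedBall_zero_iff.2 hu, rfl⟩
  rintro _ ⟨w, hw, rfl⟩
  exact B.unit_le_opNorm ((pi_norm_const_le w).trans (mem_closedBall_zero_iff.1 hw))

variable [Fintype ι]

lemma norm_apply_diag_le_diagonalNorm_mul_pow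
    (B : ContinuousMultilinearMap 𝕜 (fun _ : ι => E) F) (u : E) :
    ‖B (fun _ => u)‖ ≤ diagonalNorm B * ‖u‖ ^ Fintype.card ι := by
  obtain ⟨w, hw, hwu⟩ := exists_norm_le_one_and_norm_smul_eq 𝕜 u
  calc ‖B (fun _ => u)‖ = ‖B (fun _ => (‖u‖ : 𝕜) • w)‖ := by rw [hwu]
    _ = ‖B (fun _ => w)‖ * ‖u‖ ^ Fintype.card ι := by
        rw [B.map_smul_univ (fun _ => (‖u‖ : 𝕜)) fun _ => w, norm_smul, mul_comm]
        simp
    _ ≤ diagonalNorm B * ‖u‖ ^ Fintype.card ι := by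
        gcongr
        exact norm_apply_diag_le_diagonalNorm B hw

lemma opNorm_le_of_norm_le_one {B : ContinuousMultilinearMap 𝕜 (fun _ : ι => E) F} {C : ℝ}
    (hC : ∀ x : ι → E, (∀ i, ‖x i‖ ≤ 1) → ‖B x‖ ≤ C) : ‖B‖ ≤ C := by
  refine B.opNorm_le_bound ((norm_nonneg _).trans (hC 0 (by simp))) fun x => ?_
  choose w hw hwx using fun i => exists_norm_le_one_and_norm_smul_eq 𝕜 (x i)
  calc ‖B x‖ = ‖B fun i => (‖x i‖ : 𝕜) • w i‖ := by simp only [hwx]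
    _ = ‖B w‖ * ∏ i, ‖x i‖ := by
        rw [B.map_smul_univ (fun i => (‖x i‖ : 𝕜)) w, norm_smul, mul_comm, norm_prod]
        simp
    _ ≤ C * ∏ i, ‖x i‖ := by
        gcongr
        exact hC w hw

theorem ClarksonInequality.opNorm_le_mul_diagonalNorm {p : ℝ}
    (h : ClarksonInequality E p (Fintype.card ι)) (hp : 0 < p) (hpι : p ≤ Fintype.card ι)
    (B : ContinuousMultilinearMap 𝕜 (fun _ : ι => E) F)
    (hB : ∀ (σ : Equiv.Perm ι) (v : ι → E), B (v ∘ σ) = B v) :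
    ‖B‖ ≤ (Fintype.card ι : ℝ) ^ ((Fintype.card ι : ℝ) / p) / (Fintype.card ι).factorial *
      diagonalNorm B := by
  classical
  refine opNorm_le_of_norm_le_one fun x hx => ?_
  set m := Fintype.card ι
  have polarization := sum_prod_sign_smul_map_sum_sign_smul B.toMultilinearMap hB x
  have average : ∑ ε : ι → ℤˣ, ‖∑ i, ε i • x i‖ ^ m ≤ 2 ^ m * (m : ℝ) ^ ((m : ℝ) / p) := by
    have h_le := h.sum_norm_sum_sign_smul_rpow_le hp hpι x Finset.univ
    simp only [Real.rpow_natCast] at h_le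
    refine h_le.trans ?_
    gcongr
    calc ∑ i, ‖x i‖ ^ p ≤ ∑ _i : ι, (1 : ℝ) := by
          gcongr with i
          exact Real.rpow_le_one (norm_nonneg _) (hx i) hp.le
      _ = m := by simp [m]
  have bound : (2 ^ m * m.factorial) * ‖B x‖ ≤
      2 ^ m * ((m : ℝ) ^ ((m : ℝ) / p) * diagonalNorm B) :=
    calc (2 ^ m * m.factorial) * ‖B x‖
        = ‖∑ ε : ι → ℤˣ, (∏ i, ε i) • B (fun _ => ∑ i, ε i • x i)‖ := by
          refine Eq.trans ?_ (congrArg norm polarization).symm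
          rw [← Nat.cast_smul_eq_nsmul 𝕜, norm_smul, RCLike.norm_natCast]
          push_cast
          rfl
      _ ≤ ∑ ε : ι → ℤˣ, diagonalNorm B * ‖∑ i, ε i • x i‖ ^ m := by
          refine norm_sum_le_of_le _ fun ε _ => ?_
          rw [norm_units_zsmul]
          exact norm_apply_diag_le_diagonalNorm_mul_pow B _
      _ ≤ diagonalNorm B * (2 ^ m * (m : ℝ) ^ ((m : ℝ) / p)) := by
          rw [← Finset.mul_sum]
          gcongr
          exact diagonalNorm_nonneg B
      _ = 2 ^ m * ((m : ℝ) ^ ((m : ℝ) / p) * diagonalNorm B) := by ring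
  rw [div_mul_eq_mul_div, le_div_iff₀ (by positivity), mul_comm]
  rw [mul_assoc] at bound
  exact le_of_mul_le_mul_left bound (by positivity)

theorem opNorm_lp_le_mul_diagonalNorm {α : Type*} {H : α → Type*} [∀ a, NormedAddCommGroup (H a)]
    [∀ a, NormedSpace 𝕜 (H a)] [∀ a, InnerProductSpace ℝ (H a)] {p : ℝ≥0∞} [Fact (1 ≤ p)]
    (hp : 0 < p.toReal) {m : ℕ} (hm : 2 ≤ m) (hpm : p.toReal ≤ (m : ℝ) / (m - 1))
    (B : ContinuousMultilinearMap 𝕜 (fun _ : Fin m => lp H p) F)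
    (hB : ∀ (σ : Equiv.Perm (Fin m)) (v : Fin m → lp H p), B (v ∘ σ) = B v) :
    ‖B‖ ≤ (m : ℝ) ^ ((m : ℝ) / p.toReal) / m.factorial * diagonalNorm B := by
  have hm2 : (2 : ℝ) ≤ m := by exact_mod_cast hm
  have hp_le : p.toReal ≤ m := hpm.trans (div_le_self (by positivity) (by linarith))
  have clarkson : ClarksonInequality (lp H p) p.toReal (Fintype.card (Fin m)) := by
    rw [Fintype.card_fin]
    exact .lp hp hp_le fun a =>
      (clarksonInequality_of_innerProductSpace (H a) hm).mono hp hpm (Nat.cast_nonneg m)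
  simpa only [Fintype.card_fin] using
    clarkson.opNorm_le_mul_diagonalNorm hp (by rwa [Fintype.card_fin]) B hB

end DiagonalNorm

section SymmetricProductForm

lemma sum_lp_single_apply {α : Type*} [DecidableEq α] {E : α → Type*}
    [∀ a, NormedAddCommGroup (E a)] {p : ℝ≥0∞} (f : ∀ a, E a) {s : Finset α} {a : α}
    (ha : a ∈ s) : (∑ b ∈ s, lp.single p b (f b) : lp E p) a = f a := by
  rw [lp.coeFn_sum, Finset.sum_apply, Finset.sum_eq_single_of_mem a ha fun b _ hb =>
    lp.single_apply_ne p b (f b) hb.symm, lp.single_apply_self]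

variable (𝕜 : Type*) [RCLike 𝕜] (p : ℝ≥0∞) [Fact (1 ≤ p)] (m : ℕ)

/-- The symmetric `m`-linear form on `ℓ_p` whose associated polynomial is the product of the first
`m` coordinates. Coordinates are indexed from `0`. -/
noncomputable def symmetricProductForm :
    ContinuousMultilinearMap 𝕜 (fun _ : Fin m => lp (fun _ : ℕ => 𝕜) p) 𝕜 :=
  (m.factorial : 𝕜)⁻¹ • ∑ σ : Equiv.Perm (Fin m),
    (ContinuousMultilinearMap.mkPiAlgebra 𝕜 (Fin m) 𝕜).compContinuousLinearMap
      fun i => lp.evalCLM 𝕜 (fun _ : ℕ => 𝕜) p (σ i : ℕ)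

variable {𝕜 p m}

lemma symmetricProductForm_apply (v : Fin m → lp (fun _ : ℕ => 𝕜) p) :
    symmetricProductForm 𝕜 p m v =
      (m.factorial : 𝕜)⁻¹ * ∑ σ : Equiv.Perm (Fin m), ∏ i : Fin m, v i (σ i : ℕ) := by
  rw [symmetricProductForm, smul_apply, sum_apply, smul_eq_mul]
  rfl

lemma symmetricProductForm_comp_perm (τ : Equiv.Perm (Fin m))
    (v : Fin m → lp (fun _ : ℕ => 𝕜) p) :
    symmetricProductForm 𝕜 p m (v ∘ τ) = symmetricProductForm 𝕜 p m v := by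
  rw [symmetricProductForm_apply, symmetricProductForm_apply,
    ← Equiv.sum_comp (Equiv.mulRight τ)]
  congr! 2 with σ
  exact Equiv.prod_comp τ fun i => v i (σ i : ℕ)

lemma symmetricProductForm_apply_diag (u : lp (fun _ : ℕ => 𝕜) p) :
    symmetricProductForm 𝕜 p m (fun _ => u) = ∏ i : Fin m, u (i : ℕ) := by
  have prod_perm (σ : Equiv.Perm (Fin m)) : ∏ i, u (σ i : ℕ) = ∏ i : Fin m, u (i : ℕ) :=
    Equiv.prod_comp σ fun i => u (i : ℕ)
  have factorial_ne_zero : (m.factorial : 𝕜) ≠ 0 := Nat.cast_ne_zero.2 m.factorial_ne_zero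
  simp [symmetricProductForm_apply, prod_perm, Fintype.card_perm, factorial_ne_zero]

lemma symmetricProductForm_apply_single :
    symmetricProductForm 𝕜 p m (fun i => lp.single p (i : ℕ) (1 : 𝕜)) = (m.factorial : 𝕜)⁻¹ := by
  rw [symmetricProductForm_apply, Finset.sum_eq_single 1]
  · simp
  · intro σ _ hσ
    obtain ⟨i, hi⟩ := not_forall.1 fun h => hσ (Equiv.ext h)
    refine Finset.prod_eq_zero (Finset.mem_univ i) ?_
    exact lp.single_apply_ne (E := fun _ : ℕ => 𝕜) _ _ _ fun h => hi (Fin.ext h)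
  · simp

lemma inv_factorial_le_norm_symmetricProductForm (hp : 0 < p.toReal) :
    (m.factorial : ℝ)⁻¹ ≤ ‖symmetricProductForm 𝕜 p m‖ := by
  have h := (symmetricProductForm 𝕜 p m).le_opNorm fun i => lp.single p (i : ℕ) (1 : 𝕜)
  have norm_single (i : Fin m) :
      ‖(lp.single p (i : ℕ) (1 : 𝕜) : lp (fun _ : ℕ => 𝕜) p)‖ = 1 := by
    rw [lp.norm_single (ENNReal.toReal_pos_iff.1 hp).1, norm_one]
  simpa [symmetricProductForm_apply_single, norm_single] using h

lemma diagonalNorm_symmetricProductForm (hp : 0 < p.toReal) (hm : m ≠ 0) :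
    diagonalNorm (symmetricProductForm 𝕜 p m) = (m : ℝ) ^ (-(m : ℝ) / p.toReal) := by
  set r := p.toReal
  have hm0 : (0 : ℝ) < m := by positivity
  refine IsGreatest.csSup_eq ⟨?_, ?_⟩
  · let c : ℝ := (m : ℝ) ^ (-r⁻¹)
    have hc : 0 ≤ c := by positivity
    let u : lp (fun _ : ℕ => 𝕜) p := ∑ j ∈ Finset.range m, lp.single p j (c : 𝕜)
    refine ⟨u, mem_closedBall_zero_iff.2 ?_, ?_⟩
    · have norm_rpow : ‖u‖ ^ r = 1 := by
        rw [lp.norm_sum_single hp (fun _ => (c : 𝕜))]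
        simp only [RCLike.norm_ofReal, abs_of_nonneg hc, Finset.sum_const, Finset.card_range,
          nsmul_eq_mul]
        rw [← Real.rpow_mul hm0.le, neg_mul, inv_mul_cancel₀ hp.ne', Real.rpow_neg_one,
          mul_inv_cancel₀ hm0.ne']
      rw [← Real.rpow_le_rpow_iff (norm_nonneg u) zero_le_one hp, norm_rpow, Real.one_rpow]
    · have u_apply (i : Fin m) : u (i : ℕ) = c :=
        sum_lp_single_apply (fun _ => (c : 𝕜)) (Finset.mem_range.2 i.2)
      simp only [symmetricProductForm_apply_diag, u_apply, Finset.prod_const,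
        Finset.card_univ, Fintype.card_fin, norm_pow, RCLike.norm_ofReal, abs_of_nonneg hc]
      rw [← Real.rpow_mul_natCast hm0.le]
      congr 1
      ring
  · rintro _ ⟨u, hu, rfl⟩
    have : Nonempty (Fin m) := ⟨⟨0, Nat.pos_of_ne_zero hm⟩⟩
    have sum_le_one : ∑ i : Fin m, ‖u (i : ℕ)‖ ^ r ≤ 1 := by
      rw [← Finset.sum_range fun i => ‖u i‖ ^ r]
      exact (lp.sum_rpow_le_norm_rpow hp u _).trans
        (Real.rpow_le_one (norm_nonneg _) (mem_closedBall_zero_iff.1 hu) hp.le)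
    simpa only [symmetricProductForm_apply_diag, norm_prod, Fintype.card_fin] using
      prod_le_rpow_of_sum_rpow_le_one (a := fun i : Fin m => ‖u (i : ℕ)‖) hp
        (fun _ => norm_nonneg _) sum_le_one

lemma mul_diagonalNorm_symmetricProductForm (hp : 0 < p.toReal) (hm : m ≠ 0) :
    (m : ℝ) ^ ((m : ℝ) / p.toReal) / m.factorial * diagonalNorm (symmetricProductForm 𝕜 p m) =
      1 / m.factorial := by
  have hm0 : (0 : ℝ) < m := by positivity
  rw [diagonalNorm_symmetricProductForm hp hm, div_mul_eq_mul_div, ← Real.rpow_add hm0, ← add_div,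
    add_neg_cancel, zero_div, Real.rpow_zero]

lemma norm_symmetricProductForm (hp : 0 < p.toReal) (hm : 2 ≤ m)
    (hpm : p.toReal ≤ (m : ℝ) / (m - 1)) :
    ‖symmetricProductForm 𝕜 p m‖ = 1 / m.factorial := by
  refine le_antisymm ?_ ?_
  · rw [← mul_diagonalNorm_symmetricProductForm (𝕜 := 𝕜) hp (by omega)]
    exact opNorm_lp_le_mul_diagonalNorm hp hm hpm _ symmetricProductForm_comp_perm
  · rw [one_div]
    exact inv_factorial_le_norm_symmetricProductForm hp

end SymmetricProductForm

/-- Sharpness of the polarization constant of `ℓ_p` for `1 ≤ p ≤ m' = m/(m-1)`: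
the symmetric `m`-linear form `L(x₁,…,x_m) = (1/m!) Σ_σ x_{1σ(1)}⋯x_{mσ(m)}`, whose
associated polynomial is `L̂(u) = u₁⋯u_m`, satisfies `‖L‖ = 1/m!`, `‖L̂‖ = m^{-m/p}`,
hence `‖L‖ = (m^{m/p}/m!) ‖L̂‖`; consequently the `m`-th polarization constant of
`ℓ_p` equals `m^{m/p}/m!`. -/
theorem polarization_constant_lp_small_p
    {𝕜 : Type*} [RCLike 𝕜] (p : ℝ) (m : ℕ) (hm : 2 ≤ m)
    (hp1 : 1 ≤ p) (hpm : p ≤ (m : ℝ) / ((m : ℝ) - 1)) [Fact (1 ≤ ENNReal.ofReal p)] :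
    (∃ L : ContinuousMultilinearMap 𝕜
        (fun _ : Fin m => lp (fun _ : ℕ => 𝕜) (ENNReal.ofReal p)) 𝕜,
      (∀ (σ : Equiv.Perm (Fin m)) (v : Fin m → lp (fun _ : ℕ => 𝕜) (ENNReal.ofReal p)),
        L (v ∘ σ) = L v) ∧
      (∀ v, L v = (m.factorial : 𝕜)⁻¹ *
        ∑ σ : Equiv.Perm (Fin m), ∏ i : Fin m, v i ((σ i : ℕ))) ∧
      ‖L‖ = 1 / (m.factorial : ℝ) ∧
      sSup ((fun u => ‖L (fun _ => u)‖) ''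
          closedBall (0 : lp (fun _ : ℕ => 𝕜) (ENNReal.ofReal p)) 1)
        = (m : ℝ) ^ (-(m : ℝ) / p) ∧
      ‖L‖ = (m : ℝ) ^ ((m : ℝ) / p) / (m.factorial : ℝ)
        * sSup ((fun u => ‖L (fun _ => u)‖) ''
            closedBall (0 : lp (fun _ : ℕ => 𝕜) (ENNReal.ofReal p)) 1)) ∧
    sInf {M : ℝ |
        ∀ B : ContinuousMultilinearMap 𝕜
          (fun _ : Fin m => lp (fun _ : ℕ => 𝕜) (ENNReal.ofReal p)) 𝕜,
        (∀ (σ : Equiv.Perm (Fin m)) (v : Fin m → lp (fun _ : ℕ => 𝕜) (ENNReal.ofReal p)),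
          B (v ∘ σ) = B v) →
        ‖B‖ ≤ M * sSup ((fun u => ‖B (fun _ => u)‖) ''
            closedBall (0 : lp (fun _ : ℕ => 𝕜) (ENNReal.ofReal p)) 1)}
      = (m : ℝ) ^ ((m : ℝ) / p) / (m.factorial : ℝ) := by
  have hp0 : 0 < p := zero_lt_one.trans_le hp1
  have p_toReal : (ENNReal.ofReal p).toReal = p := ENNReal.toReal_ofReal hp0.le
  have hp0' : 0 < (ENNReal.ofReal p).toReal := by rwa [p_toReal]
  have hpm' : (ENNReal.ofReal p).toReal ≤ (m : ℝ) / (m - 1) := by rwa [p_toReal]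
  let L := symmetricProductForm 𝕜 (ENNReal.ofReal p) m
  have norm_L : ‖L‖ = 1 / m.factorial := norm_symmetricProductForm hp0' hm hpm'
  have diag_L : diagonalNorm L = (m : ℝ) ^ (-(m : ℝ) / p) := by
    simpa only [p_toReal] using diagonalNorm_symmetricProductForm (𝕜 := 𝕜) hp0' (by omega : m ≠ 0)
  have extremal : ‖L‖ = (m : ℝ) ^ ((m : ℝ) / p) / m.factorial * diagonalNorm L := by
    simpa only [p_toReal, norm_L] using
      (mul_diagonalNorm_symmetricProductForm (𝕜 := 𝕜) hp0' (by omega : m ≠ 0)).symm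
  refine ⟨⟨L, symmetricProductForm_comp_perm, symmetricProductForm_apply, norm_L, diag_L,
    extremal⟩, IsLeast.csInf_eq ⟨fun B hB => ?_, fun M hM => ?_⟩⟩
  · have upper := opNorm_lp_le_mul_diagonalNorm hp0' hm hpm' B hB
    rwa [p_toReal] at upper
  · have diag_pos : 0 < diagonalNorm L := by rw [diag_L]; positivity
    exact le_of_mul_le_mul_right (extremal.symm.trans_le (hM L symmetricProductForm_comp_perm))
      diag_pos
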